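/- Let S : L¹(ℝ^d) → L¹(ℝ^d) be a positive bounded linear operator such that for some k ∈ ℕ and κ₀ > 0: (1) there exists g₀ ∈ L¹₊ \ {0} with S g₀ ≥ κ₀ g₀, or there exists ψ₀ ∈ L^∞₊ \ {0} with S* ψ₀ ≥ κ₀ ψ₀; (2) S^k = W + K with ‖W‖ < κ₀^k and K weakly compact in L¹; (3) for every f ∈ L¹₊ \ {0}, S^k f(x) > 0 for almost every x ∈ ℝ^d. Then there exists a unique triplet (Λ₀, f₀, φ₀) ∈ ℝ × L¹₊(ℝ^d) × L^∞₊(ℝ^d) such that S f₀ = Λ₀ f₀, S* φ₀ = Λ₀ φ₀, ‖φ₀‖_{L^∞} = 1 and ⟨φ₀, f₀⟩ = 1; moreover Λ₀ > 0, f₀ > 0 a.e. and φ₀ > 0 a.e. -/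

import Mathlib

open MeasureTheory Filter ENNReal
open scoped Topology Ring

/-!
The eigenvalue is the infimum of the `t` at which the resolvent of `S` exists and is positive.
Positive sub-eigenvectors of `S` or of its adjoint bound it from below by `κ₀`, and the resolvent
blows up there, which yields approximate positive eigenvectors of `S` and of its adjoint.
Since `S ^ k` differs from a weakly compact operator by an operator of norm less than `Λ₀ ^ k`,
the approximate eigenvectors of `S` have a weak cluster point along an ultrafilter, which is
nonzero because the norm of `L¹` is the integral on the positive cone. The approximate dual
eigenvectors have a weak-* cluster point `φ₀`. It cannot vanish: otherwise they would tend to `0`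
almost everywhere along a subsequence, hence be dominated by functions tending weakly-* to `0`,
which the weakly compact part does not see, forcing `Λ₀ ^ k ≤ ‖W‖`.
Uniqueness comes from `S ^ k` and its adjoint being positivity improving: a real eigenvector
annihilated by a strictly positive dual eigenvector has no positive part.
-/

section Resolvent

variable {X : Type*} [NormedAddCommGroup X] [NormedSpace ℝ X] {S : X →L[ℝ] X} {t : ℝ}

lemma apply_resolvent_eq (ht : t ∈ resolventSet ℝ S) (f : X) :
    S (resolvent S t f) = t • resolvent S t f - f := by
  have h : (algebraMap ℝ (X →L[ℝ] X) t - S) (resolvent S t f) = f :=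
    congr($(Ring.mul_inverse_cancel _ ht) f)
  rw [sub_apply, ContinuousLinearMap.algebraMap_apply] at h
  rw [eq_sub_iff_add_eq, ← eq_sub_iff_add_eq', h]

lemma resolvent_apply_eq (ht : t ∈ resolventSet ℝ S) (f : X) :
    resolvent S t (S f) = t • resolvent S t f - f := by
  have h : resolvent S t ((algebraMap ℝ (X →L[ℝ] X) t - S) f) = f :=
    congr($(Ring.inverse_mul_cancel _ ht) f)
  rw [sub_apply, ContinuousLinearMap.algebraMap_apply, map_sub, map_smul] at h
  rw [eq_sub_iff_add_eq, ← eq_sub_iff_add_eq', h]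

end Resolvent

section BanachLattice

variable {X : Type*} [NormedAddCommGroup X] [Lattice X] [NormedSpace ℝ X]
  {Y : Type*} [NormedAddCommGroup Y] [Lattice Y] [HasSolidNorm Y] [NormedSpace ℝ Y]

lemma norm_apply_le_norm_apply_abs {S : X →L[ℝ] Y} (hS : Monotone S) (f : X) :
    ‖S f‖ ≤ ‖S |f|‖ := by
  refine norm_le_norm_of_abs_le_abs ((abs_le'.2 ⟨hS (le_abs_self f), ?_⟩).trans (le_abs_self _))
  rw [← map_neg]
  exact hS (neg_le_abs f)

lemma monotone_pow {S : X →L[ℝ] X} (hS : Monotone S) (n : ℕ) : Monotone ⇑(S ^ n) :=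
  FunLike.coe_pow_eq_iterate S n ▸ hS.iterate n

variable [HasSolidNorm X] [IsOrderedAddMonoid X]

lemma exists_nonneg_norm_le_one_lt_norm_apply {S : X →L[ℝ] Y} (hS : Monotone S) {c : ℝ}
    (hc : c < ‖S‖) : ∃ g : X, 0 ≤ g ∧ ‖g‖ ≤ 1 ∧ c < ‖S g‖ := by
  obtain ⟨x, hx, hcx⟩ := S.exists_lt_apply_of_lt_opNorm hc
  exact ⟨|x|, abs_nonneg x, (norm_abs_eq_norm x).trans_le hx.le,
    hcx.trans_le (norm_apply_le_norm_apply_abs hS x)⟩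

lemma opNorm_le_of_monotone {S : X →L[ℝ] Y} (hS : Monotone S) {C : ℝ} (hC : 0 ≤ C)
    (h : ∀ f, 0 ≤ f → ‖S f‖ ≤ C * ‖f‖) : ‖S‖ ≤ C :=
  S.opNorm_le_bound hC fun f ↦ (norm_apply_le_norm_apply_abs hS f).trans
    (norm_abs_eq_norm f ▸ h |f| (abs_nonneg f))

lemma exists_nonneg_apply_pos {ψ : StrongDual ℝ X} (hψ : Monotone ψ) (hψ0 : ψ ≠ 0) :
    ∃ f : X, 0 ≤ f ∧ 0 < ψ f := by
  obtain ⟨f, hf, -, hψf⟩ := exists_nonneg_norm_le_one_lt_norm_apply hψ (norm_pos_iff.2 hψ0)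
  exact ⟨f, hf, ((monotone_iff_map_nonneg ψ).1 hψ f hf).lt_of_ne' (norm_pos_iff.1 hψf)⟩

variable [CompleteSpace X]

lemma monotone_inverse_one_sub {B : X →L[ℝ] X} (hB : Monotone B) (hB1 : ‖B‖ < 1) :
    Monotone ((1 - B)⁻¹ʳ : X →L[ℝ] X) := by
  have hsum : HasSum (fun n ↦ B ^ n) (1 - B)⁻¹ʳ := by
    rw [NormedRing.inverse_one_sub B hB1]
    exact (summable_geometric_of_norm_lt_one hB1).hasSum
  refine (monotone_iff_map_nonneg _).2 fun f hf ↦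
    ((ContinuousLinearMap.apply ℝ X f).hasSum hsum).nonneg fun n ↦ ?_
  exact (monotone_iff_map_nonneg (B ^ n)).1 (monotone_pow hB n) f hf

lemma isUnit_sub_and_monotone_inverse {A B : X →L[ℝ] X} (hA : IsUnit A)
    (hA' : Monotone (A⁻¹ʳ : X →L[ℝ] X)) (hB : Monotone B) (hAB : ‖A⁻¹ʳ * B‖ < 1) :
    IsUnit (A - B) ∧ Monotone ((A - B)⁻¹ʳ : X →L[ℝ] X) := by
  have hfactor : A - B = A * (1 - A⁻¹ʳ * B) := by
    rw [mul_sub, mul_one, Ring.mul_inverse_cancel_left _ _ hA]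
  have hAB' : Monotone ⇑(A⁻¹ʳ * B) := hA'.comp hB
  rw [hfactor, Ring.inverse_mul (.inl hA)]
  exact ⟨hA.mul (isUnit_one_sub_of_norm_lt_one hAB),
    (monotone_inverse_one_sub hAB' hAB).comp hA'⟩

end BanachLattice

section PerronBound

variable {X : Type*} [NormedAddCommGroup X] [Lattice X] [NormedSpace ℝ X] {S : X →L[ℝ] X}

/-- The real numbers at which the resolvent of `S` exists and is a positive operator. -/
def positiveResolventSet (S : X →L[ℝ] X) : Set ℝ :=
  {t ∈ resolventSet ℝ S | Monotone ⇑(resolvent S t)}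

/-- The infimum of `positiveResolventSet S`, which for a positive operator on a Banach lattice is
its spectral radius. Only its variational role is used: positive sub-eigenvectors bound it from
below and the resolvent blows up at it. The value `0` may be the junk value of `sInf`, which is why
`perronBound S ≠ 0` is a recurring hypothesis. -/
noncomputable def perronBound (S : X →L[ℝ] X) : ℝ :=
  sInf (positiveResolventSet S)

variable [HasSolidNorm X] [IsOrderedAddMonoid X] [PosSMulMono ℝ X] [CompleteSpace X]

lemma mem_positiveResolventSet_of_norm_lt (hS : Monotone S) {t : ℝ} (ht : ‖S‖ < t) :
    t ∈ positiveResolventSet S := by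
  have ht0 : 0 < t := (norm_nonneg S).trans_lt ht
  have hunit : IsUnit (algebraMap ℝ (X →L[ℝ] X) t) := ht0.ne'.isUnit.map _
  have hinv : (algebraMap ℝ (X →L[ℝ] X) t)⁻¹ʳ = algebraMap ℝ (X →L[ℝ] X) t⁻¹ := by
    rw [← mul_one (_⁻¹ʳ), Ring.inverse_mul_eq_iff_eq_mul _ _ _ hunit, ← map_mul,
      mul_inv_cancel₀ ht0.ne', map_one]
  refine isUnit_sub_and_monotone_inverse hunit ?_ hS ?_
  · rw [hinv]
    exact fun f g hfg ↦ smul_le_smul_of_nonneg_left hfg (inv_nonneg.2 ht0.le)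
  · rw [hinv, ← Algebra.smul_def, norm_smul, norm_inv, Real.norm_of_nonneg ht0.le]
    exact (inv_mul_lt_one₀ ht0).2 ht

lemma sub_mem_positiveResolventSet {t δ : ℝ} (ht : t ∈ positiveResolventSet S) (hδ : 0 ≤ δ)
    (hδt : ‖resolvent S t‖ * δ < 1) : t - δ ∈ positiveResolventSet S := by
  have hnorm : ‖resolvent S t * algebraMap ℝ (X →L[ℝ] X) δ‖ < 1 := by
    rwa [← Algebra.commutes, ← Algebra.smul_def, norm_smul, Real.norm_of_nonneg hδ, mul_comm]
  have hmem := isUnit_sub_and_monotone_inverse ht.1 ht.2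
    (fun f g hfg ↦ smul_le_smul_of_nonneg_left hfg hδ) hnorm
  rwa [sub_right_comm, ← map_sub] at hmem

lemma one_le_norm_resolvent_mul_sub_perronBound (h0 : perronBound S ≠ 0) {t : ℝ}
    (ht : t ∈ positiveResolventSet S) : 1 ≤ ‖resolvent S t‖ * (t - perronBound S) := by
  have hbdd : BddBelow (positiveResolventSet S) := not_imp_comm.1 Real.sInf_of_not_bddBelow h0
  by_contra! hlt
  have hmem : perronBound S ∈ positiveResolventSet S := by
    rw [← sub_sub_cancel t (perronBound S)]
    exact sub_mem_positiveResolventSet ht (sub_nonneg.2 (csInf_le hbdd ht)) hlt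
  obtain ⟨δ, hδ, hδ1⟩ := exists_pos_mul_lt one_pos ‖resolvent S (perronBound S)‖
  have hle : perronBound S ≤ perronBound S - δ :=
    csInf_le hbdd (sub_mem_positiveResolventSet hmem hδ.le hδ1)
  linarith

lemma le_perronBound_of_smul_le_apply (hS : Monotone S) {g : X} {κ : ℝ} (hg : 0 ≤ g)
    (hg0 : g ≠ 0) (hκ : κ • g ≤ S g) : κ ≤ perronBound S := by
  refine le_csInf ⟨_, mem_positiveResolventSet_of_norm_lt hS (lt_add_one ‖S‖)⟩ fun t ht ↦ ?_
  by_contra! htκ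
  have hR : κ • resolvent S t g ≤ t • resolvent S t g - g := by
    rw [← map_smul, ← resolvent_apply_eq ht.1]
    exact ht.2 hκ
  have hRg : 0 ≤ resolvent S t g := (monotone_iff_map_nonneg (resolvent S t)).1 ht.2 g hg
  refine hg0 (le_antisymm ?_ hg)
  calc g ≤ (t - κ) • resolvent S t g := by rw [sub_smul]; exact le_sub_comm.1 hR
    _ ≤ 0 := smul_nonpos_of_nonpos_of_nonneg (sub_neg.2 htκ).le hRg

lemma le_perronBound_of_mul_le_comp (hS : Monotone S) {ψ : StrongDual ℝ X} {κ : ℝ}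
    (hψ : Monotone ψ) (hψ0 : ψ ≠ 0) (hκ : ∀ f, 0 ≤ f → κ * ψ f ≤ ψ (S f)) :
    κ ≤ perronBound S := by
  refine le_csInf ⟨_, mem_positiveResolventSet_of_norm_lt hS (lt_add_one ‖S‖)⟩ fun t ht ↦ ?_
  obtain ⟨f, hf, hψf⟩ := exists_nonneg_apply_pos hψ hψ0
  have hRf := (monotone_iff_map_nonneg (resolvent S t)).1 ht.2 f hf
  have h := hκ _ hRf
  rw [apply_resolvent_eq ht.1, map_sub, map_smul, smul_eq_mul] at h
  by_contra! htκ
  nlinarith [(monotone_iff_map_nonneg ψ).1 hψ _ hRf]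

end PerronBound

section ApproximateEigenvectors

lemma tendsto_pow_sub_algebraMap_apply {X ι : Type*} [NormedAddCommGroup X] [NormedSpace ℝ X]
    {S : X →L[ℝ] X} {r : ℝ} {l : Filter ι} {f : ι → X}
    (hf : Tendsto (fun i ↦ (S - algebraMap ℝ (X →L[ℝ] X) r) (f i)) l (𝓝 0)) (n : ℕ) :
    Tendsto (fun i ↦ (S ^ n - algebraMap ℝ (X →L[ℝ] X) (r ^ n)) (f i)) l (𝓝 0) := by
  rw [map_pow, ← (Algebra.commute_algebraMap_right r S).geom_sum₂_mul n]
  set P := ∑ i ∈ Finset.range n, S ^ i * algebraMap ℝ (X →L[ℝ] X) r ^ (n - 1 - i)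
  exact map_zero P ▸ (P.continuous.tendsto 0).comp hf

lemma tendsto_comp_pow_sub_algebraMap {X ι : Type*} [NormedAddCommGroup X] [NormedSpace ℝ X]
    {S : X →L[ℝ] X} {r : ℝ} {l : Filter ι} {q : ι → StrongDual ℝ X}
    (hq : Tendsto (fun i ↦ q i ∘L (S - algebraMap ℝ (X →L[ℝ] X) r)) l (𝓝 0)) (n : ℕ) :
    Tendsto (fun i ↦ q i ∘L (S ^ n - algebraMap ℝ (X →L[ℝ] X) (r ^ n))) l (𝓝 0) := by
  rw [map_pow, ← (Algebra.commute_algebraMap_right r S).mul_geom_sum₂ n]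
  set P := ∑ i ∈ Finset.range n, S ^ i * algebraMap ℝ (X →L[ℝ] X) r ^ (n - 1 - i)
  have hP := ((ContinuousLinearMap.compL ℝ X X ℝ).flip P).continuous.tendsto 0
  exact map_zero ((ContinuousLinearMap.compL ℝ X X ℝ).flip P) ▸ hP.comp hq

lemma tendsto_apply_pow_of_tendsto_comp_sub_algebraMap {X ι : Type*} [NormedAddCommGroup X]
    [NormedSpace ℝ X] {S : X →L[ℝ] X} {r c : ℝ} {l : Filter ι} {q : ι → StrongDual ℝ X}
    (hq : Tendsto (fun i ↦ q i ∘L (S - algebraMap ℝ (X →L[ℝ] X) r)) l (𝓝 0)) {g : ι → X}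
    (hg : ∀ i, ‖g i‖ ≤ 1) (hqg : Tendsto (fun i ↦ q i (g i)) l (𝓝 c)) (n : ℕ) :
    Tendsto (fun i ↦ q i ((S ^ n) (g i))) l (𝓝 (r ^ n * c)) := by
  have herr : Tendsto (fun i ↦ (q i ∘L (S ^ n - algebraMap ℝ (X →L[ℝ] X) (r ^ n))) (g i)) l
      (𝓝 0) :=
    squeeze_zero_norm (fun i ↦ ContinuousLinearMap.unit_le_opNorm _ _ (hg i))
      (tendsto_zero_iff_norm_tendsto_zero.1 (tendsto_comp_pow_sub_algebraMap hq n))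
  refine (zero_add (r ^ n * c) ▸ herr.add (hqg.const_mul (r ^ n))).congr fun i ↦ ?_
  simp only [ContinuousLinearMap.comp_apply, sub_apply, ContinuousLinearMap.algebraMap_apply,
    map_sub, map_smul, smul_eq_mul, sub_add_cancel]

variable {X : Type*} [NormedAddCommGroup X] [Lattice X] [NormedSpace ℝ X] [HasSolidNorm X]
  [IsOrderedAddMonoid X] {S : X →L[ℝ] X}

lemma exists_dual_vector_of_mem_positiveResolventSet {t : ℝ} (ht : t ∈ positiveResolventSet S)
    (hpos : 0 < ‖resolvent S t‖) {I : StrongDual ℝ X} (hI : ∀ f, 0 ≤ f → I f = ‖f‖) :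
    ∃ q : StrongDual ℝ X, Monotone q ∧ ‖q‖ ≤ 1 ∧
      (∀ f, 0 ≤ f → q f = ‖resolvent S t‖⁻¹ * ‖resolvent S t f‖) ∧
      ∀ r, q ∘L (S - algebraMap ℝ (X →L[ℝ] X) r) = (t - r) • q - ‖resolvent S t‖⁻¹ • I := by
  set R := resolvent S t
  set q : StrongDual ℝ X := ‖R‖⁻¹ • I ∘L R
  have hq_nonneg (f : X) (hf : 0 ≤ f) : q f = ‖R‖⁻¹ * ‖R f‖ :=
    congr(‖R‖⁻¹ * $(hI _ ((monotone_iff_map_nonneg R).1 ht.2 f hf)))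
  have hq_mono : Monotone q := (monotone_iff_map_nonneg q).2 fun f hf ↦ by
    rw [hq_nonneg f hf]
    positivity
  refine ⟨q, hq_mono, ?_, hq_nonneg, fun r ↦ ?_⟩
  · refine opNorm_le_of_monotone hq_mono zero_le_one fun f hf ↦ ?_
    rw [hq_nonneg f hf, norm_mul, norm_norm, norm_inv, norm_norm, one_mul, inv_mul_le_iff₀ hpos]
    exact R.le_opNorm f
  · ext f
    simp only [q, R, sub_apply, smul_apply, ContinuousLinearMap.comp_apply,
      ContinuousLinearMap.algebraMap_apply, map_sub, map_smul, resolvent_apply_eq ht.1]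
    module

variable [PosSMulMono ℝ X] [CompleteSpace X]

lemma exists_seq_tendsto_perronBound (hS : Monotone S) (h0 : perronBound S ≠ 0) :
    ∃ t : ℕ → ℝ, (∀ j, t j ∈ positiveResolventSet S) ∧ Tendsto t atTop (𝓝 (perronBound S)) ∧
      (∀ j, 0 < ‖resolvent S (t j)‖) ∧
      Tendsto (fun j ↦ ‖resolvent S (t j)‖⁻¹) atTop (𝓝 0) := by
  obtain ⟨t, -, ht, htmem⟩ := exists_seq_tendsto_sInf
    ⟨_, mem_positiveResolventSet_of_norm_lt hS (lt_add_one ‖S‖)⟩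
    (not_imp_comm.1 Real.sInf_of_not_bddBelow h0)
  have hblow j := one_le_norm_resolvent_mul_sub_perronBound h0 (htmem j)
  have hpos : ∀ j, 0 < ‖resolvent S (t j)‖ := fun j ↦
    (norm_nonneg _).lt_of_ne' fun h ↦ by linarith [h ▸ hblow j]
  refine ⟨t, htmem, ht, hpos, squeeze_zero (fun _ ↦ by positivity)
    (fun j ↦ (inv_le_iff_one_le_mul₀' (hpos j)).2 (hblow j)) ?_⟩
  exact sub_self (perronBound S) ▸ ht.sub_const (perronBound S)

lemma exists_approximate_eigenvectors (hS : Monotone S) (h0 : perronBound S ≠ 0) :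
    ∃ f : ℕ → X, (∀ j, 0 ≤ f j) ∧ (∀ j, ‖f j‖ = 1) ∧
      Tendsto (fun j ↦ (S - algebraMap ℝ (X →L[ℝ] X) (perronBound S)) (f j)) atTop (𝓝 0) := by
  obtain ⟨t, htmem, ht, hpos, hinv⟩ := exists_seq_tendsto_perronBound hS h0
  choose g hg0 hg1 hgR using fun j ↦
    exists_nonneg_norm_le_one_lt_norm_apply (htmem j).2 (half_lt_self (hpos j))
  set R := fun j ↦ resolvent S (t j)
  have hRg : ∀ j, 0 < ‖R j (g j)‖ := fun j ↦ (half_pos (hpos j)).trans (hgR j)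
  set f := fun j ↦ ‖R j (g j)‖⁻¹ • R j (g j)
  have hf1 : ∀ j, ‖f j‖ = 1 := fun j ↦ norm_smul_inv_norm (norm_pos_iff.1 (hRg j))
  have hdefect : ∀ j, (S - algebraMap ℝ (X →L[ℝ] X) (perronBound S)) (f j) =
      (t j - perronBound S) • f j - ‖R j (g j)‖⁻¹ • g j := fun j ↦ by
    simp only [f, R, sub_apply, ContinuousLinearMap.algebraMap_apply, map_smul,
      apply_resolvent_eq (htmem j).1]
    module
  have hgap : Tendsto (fun j ↦ t j - perronBound S) atTop (𝓝 0) :=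
    sub_self (perronBound S) ▸ ht.sub_const (perronBound S)
  have hinvRg : Tendsto (fun j ↦ ‖R j (g j)‖⁻¹) atTop (𝓝 0) := by
    refine squeeze_zero (fun _ ↦ by positivity) (fun j ↦ ?_) (mul_zero (2 : ℝ) ▸ hinv.const_mul 2)
    rw [← div_eq_mul_inv, ← inv_div]
    exact inv_anti₀ (half_pos (hpos j)) (hgR j).le
  have hfbdd : IsBoundedUnder (· ≤ ·) atTop (norm ∘ f) :=
    isBoundedUnder_of ⟨1, fun j ↦ (hf1 j).le⟩
  have hgbdd : IsBoundedUnder (· ≤ ·) atTop (norm ∘ g) := isBoundedUnder_of ⟨1, hg1⟩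
  refine ⟨f, fun j ↦ smul_nonneg (by positivity)
    ((monotone_iff_map_nonneg (R j)).1 (htmem j).2 _ (hg0 j)), hf1, ?_⟩
  simpa only [hdefect, sub_zero] using
    (hgap.zero_smul_isBoundedUnder_le hfbdd).sub (hinvRg.zero_smul_isBoundedUnder_le hgbdd)

lemma exists_approximate_dual_eigenvectors (hS : Monotone S) (h0 : perronBound S ≠ 0)
    {I : StrongDual ℝ X} (hI : ∀ f, 0 ≤ f → I f = ‖f‖) :
    ∃ (q : ℕ → StrongDual ℝ X) (g : ℕ → X), (∀ j, Monotone (q j)) ∧ (∀ j, ‖q j‖ ≤ 1) ∧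
      Tendsto (fun j ↦ q j ∘L (S - algebraMap ℝ (X →L[ℝ] X) (perronBound S))) atTop (𝓝 0) ∧
      (∀ j, 0 ≤ g j) ∧ (∀ j, ‖g j‖ ≤ 1) ∧ Tendsto (fun j ↦ q j (g j)) atTop (𝓝 1) := by
  obtain ⟨t, htmem, ht, hpos, hinv⟩ := exists_seq_tendsto_perronBound hS h0
  choose g hg0 hg1 hgR using fun j ↦
    exists_nonneg_norm_le_one_lt_norm_apply (htmem j).2 (sub_one_lt ‖resolvent S (t j)‖)
  choose q hq_mono hq_le hq_nonneg hdefect using fun j ↦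
    exists_dual_vector_of_mem_positiveResolventSet (htmem j) (hpos j) hI
  have hgap : Tendsto (fun j ↦ t j - perronBound S) atTop (𝓝 0) :=
    sub_self (perronBound S) ▸ ht.sub_const (perronBound S)
  refine ⟨q, g, hq_mono, hq_le, ?_, hg0, hg1, ?_⟩
  · have hbdd : IsBoundedUnder (· ≤ ·) atTop (norm ∘ q) := isBoundedUnder_of ⟨1, hq_le⟩
    simpa only [hdefect, zero_smul, sub_zero] using
      (hgap.zero_smul_isBoundedUnder_le hbdd).sub (hinv.smul_const I)
  · have hlow (j : ℕ) : 1 - ‖resolvent S (t j)‖⁻¹ ≤ q j (g j) :=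
      calc 1 - ‖resolvent S (t j)‖⁻¹
          = ‖resolvent S (t j)‖⁻¹ * (‖resolvent S (t j)‖ - 1) := by
            rw [mul_sub_one, inv_mul_cancel₀ (hpos j).ne']
        _ ≤ ‖resolvent S (t j)‖⁻¹ * ‖resolvent S (t j) (g j)‖ := by gcongr; exact (hgR j).le
        _ = q j (g j) := (hq_nonneg j _ (hg0 j)).symm
    have hup (j : ℕ) : q j (g j) ≤ 1 :=
      (le_abs_self _).trans ((q j).le_of_opNorm_le_of_le (hq_le j) (hg1 j) |>.trans_eq (one_mul 1))
    exact tendsto_of_tendsto_of_tendsto_of_le_of_le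
      (by simpa only [sub_zero] using hinv.const_sub 1) tendsto_const_nhds hlow hup

end ApproximateEigenvectors

section WeakLimits

variable {X Y ι : Type*} [NormedAddCommGroup X] [NormedSpace ℝ X] [NormedAddCommGroup Y]
  [NormedSpace ℝ Y]

/-- Weakly compact operators: the image of the unit ball is relatively compact for the weak
topology. Encoded as compactness of the operator into `Y` retopologised as `WeakSpace ℝ Y`. -/
def IsWeaklyCompactOperator (K : X →L[ℝ] Y) : Prop :=
  IsCompactOperator (toWeakSpaceCLM ℝ Y ∘ K)

lemma isWeaklyCompactOperator_iff_isCompact_closure_image_closedBall (K : X →L[ℝ] Y) :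
    IsWeaklyCompactOperator K ↔
      IsCompact (closure ((fun f ↦ toWeakSpaceCLM ℝ Y (K f)) '' Metric.closedBall 0 1)) :=
  isCompactOperator_iff_isCompact_closure_image_closedBall
    ((toWeakSpaceCLM ℝ Y).toLinearMap ∘ₗ K.toLinearMap) one_pos

lemma exists_weak_limit_of_isWeaklyCompactOperator {K : X →L[ℝ] Y} (hK : IsWeaklyCompactOperator K)
    (𝓤 : Ultrafilter ι) {C : ℝ} {x : ι → X} (hx : ∀ i, ‖x i‖ ≤ C) :
    ∃ y : Y, ∀ φ : StrongDual ℝ Y, Tendsto (fun i ↦ φ (K (x i))) 𝓤 (𝓝 (φ y)) := by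
  obtain ⟨Q, hQ, hsub⟩ := IsCompactOperator.image_closedBall_subset_compact
    (f := (toWeakSpaceCLM ℝ Y).toLinearMap ∘ₗ K.toLinearMap) hK C
  obtain ⟨y, -, hy⟩ := hQ.ultrafilter_le_nhds (𝓤.map fun i ↦ toWeakSpaceCLM ℝ Y (K (x i)))
    (tendsto_principal.2 (.of_forall fun i ↦
      hsub (Set.mem_image_of_mem _ (mem_closedBall_zero_iff.2 (hx i)))))
  exact ⟨(toWeakSpace ℝ Y).symm y, fun φ ↦
    ((WeakBilin.eval_continuous (topDualPairing ℝ Y).flip φ).tendsto y).comp hy⟩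

lemma exists_weakStar_limit (𝓤 : Ultrafilter ι) {C : ℝ} {q : ι → StrongDual ℝ X}
    (hq : ∀ i, ‖q i‖ ≤ C) :
    ∃ q₀ : StrongDual ℝ X, ∀ f, Tendsto (fun i ↦ q i f) 𝓤 (𝓝 (q₀ f)) := by
  obtain ⟨q₀, -, hq₀⟩ := (WeakDual.isCompact_closedBall (0 : StrongDual ℝ X) C).ultrafilter_le_nhds
    (𝓤.map fun i ↦ StrongDual.toWeakDual (q i))
    (tendsto_principal.2 (.of_forall fun i ↦ mem_closedBall_zero_iff.2 (hq i)))
  exact ⟨WeakDual.toStrongDual q₀, fun f ↦ ((WeakDual.eval_continuous f).tendsto q₀).comp hq₀⟩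

variable {l : Filter ι} {f : ι → X} {y : X}

lemma mem_of_weak_limit [NeBot l] {s : Set X} (hs : Convex ℝ s) (hsc : IsClosed s)
    (hfs : ∀ i, f i ∈ s)
    (hy : ∀ φ : StrongDual ℝ X, Tendsto (fun i ↦ φ (f i)) l (𝓝 (φ y))) : y ∈ s := by
  by_contra hys
  obtain ⟨φ, u, hφs, hφy⟩ := geometric_hahn_banach_closed_point hs hsc hys
  exact hφy.not_ge (le_of_tendsto (hy φ) (.of_forall fun i ↦ (hφs _ (hfs i)).le))

lemma apply_eq_smul_of_weak_limit [NeBot l] {S : X →L[ℝ] X} {r : ℝ}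
    (hf : Tendsto (fun i ↦ (S - algebraMap ℝ (X →L[ℝ] X) r) (f i)) l (𝓝 0))
    (hy : ∀ φ : StrongDual ℝ X, Tendsto (fun i ↦ φ (f i)) l (𝓝 (φ y))) : S y = r • y := by
  have hker : (S - algebraMap ℝ (X →L[ℝ] X) r) y = 0 :=
    (SeparatingDual.eq_iff_forall_dual_eq (R := ℝ)).2 fun φ ↦ tendsto_nhds_unique
      (hy (φ ∘L (S - algebraMap ℝ (X →L[ℝ] X) r))) ((φ.continuous.tendsto 0).comp hf)
  exact sub_eq_zero.1 hker

lemma comp_eq_smul_of_weakStar_limit [NeBot l] {S : X →L[ℝ] X} {r : ℝ} {q : ι → StrongDual ℝ X}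
    {q₀ : StrongDual ℝ X} (hq : Tendsto (fun i ↦ q i ∘L (S - algebraMap ℝ (X →L[ℝ] X) r)) l (𝓝 0))
    (hq₀ : ∀ f, Tendsto (fun i ↦ q i f) l (𝓝 (q₀ f))) : q₀ ∘L S = r • q₀ := by
  ext f
  have hker : q₀ ((S - algebraMap ℝ (X →L[ℝ] X) r) f) = 0 := tendsto_nhds_unique
    (hq₀ _) (((ContinuousLinearMap.apply ℝ ℝ f).continuous.tendsto 0).comp hq)
  rw [sub_apply, map_sub, ContinuousLinearMap.algebraMap_apply, map_smul] at hker
  exact sub_eq_zero.1 hker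

lemma exists_weak_limit_of_approximate_eigenvectors [CompleteSpace X] {W K : X →L[ℝ] X} {r : ℝ}
    (hW : ‖W‖ < r) (hK : IsWeaklyCompactOperator K) (𝓤 : Ultrafilter ι) {C : ℝ}
    (hfC : ∀ i, ‖f i‖ ≤ C)
    (hf : Tendsto (fun i ↦ (W + K - algebraMap ℝ (X →L[ℝ] X) r) (f i)) 𝓤 (𝓝 0)) :
    ∃ y : X, ∀ φ : StrongDual ℝ X, Tendsto (fun i ↦ φ (f i)) 𝓤 (𝓝 (φ y)) := by
  have hr : r ∈ resolventSet ℝ W := spectrum.mem_resolventSet_of_norm_lt_mul <|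
    calc ‖W‖ * ‖(1 : X →L[ℝ] X)‖
        ≤ ‖W‖ := mul_le_of_le_one_right (norm_nonneg W) ContinuousLinearMap.norm_id_le
      _ < ‖r‖ := hW.trans_le (le_abs_self r)
  set R := resolvent W r
  obtain ⟨z, hz⟩ := exists_weak_limit_of_isWeaklyCompactOperator hK 𝓤 hfC
  refine ⟨R z, fun φ ↦ ?_⟩
  have hfix : ∀ i, f i = R (K (f i)) - R ((W + K - algebraMap ℝ (X →L[ℝ] X) r) (f i)) :=
    fun i ↦ by
      simp only [sub_apply, add_apply, ContinuousLinearMap.algebraMap_apply, map_sub, map_add,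
        map_smul, R, resolvent_apply_eq hr]
      abel
  have hlim := (hz (φ ∘L R)).sub (((φ ∘L R).continuous.tendsto 0).comp hf)
  simp only [map_zero, sub_zero] at hlim
  exact hlim.congr fun i ↦ ((congr_arg φ (hfix i)).trans (map_sub φ _ _)).symm

end WeakLimits

section DualPairing

variable {α : Type*} [MeasurableSpace α] {μ : Measure α}

instance instPosSMulMonoLp {q : ℝ≥0∞} : PosSMulMono ℝ (Lp ℝ q μ) where
  smul_le_smul_of_nonneg_left a ha f g hfg := by
    rw [← Lp.coeFn_le] at hfg ⊢
    filter_upwards [hfg, Lp.coeFn_smul a f, Lp.coeFn_smul a g] with x hx hxf hxg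
    rw [hxf, hxg]
    exact mul_le_mul_of_nonneg_left hx ha

lemma integralCLM_eq_norm_of_nonneg {f : Lp ℝ 1 μ} (hf : 0 ≤ f) :
    (L1.integralCLM : Lp ℝ 1 μ →L[ℝ] ℝ) f = ‖f‖ := by
  rw [← L1.integral_eq, L1.integral_eq_integral, L1.norm_eq_integral_norm]
  refine integral_congr_ae ?_
  filter_upwards [(Lp.coeFn_nonneg f).2 hf] with x hx
  exact (Real.norm_of_nonneg hx).symm

lemma ae_norm_le_norm_Lp_top (p : Lp ℝ ⊤ μ) : ∀ᵐ x ∂μ, ‖p x‖ ≤ ‖p‖ := by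
  filter_upwards [ae_le_eLpNormEssSup (f := p) (μ := μ)] with x hx
  rw [Lp.norm_def, eLpNorm_exponent_top]
  exact (toReal_enorm (p x)).symm.trans_le
    (toReal_mono (eLpNorm_exponent_top (f := p) (μ := μ) ▸ (Lp.eLpNorm_lt_top p).ne) hx)

/-- The duality pairing `⟨p, f⟩ = ∫ p f` between `L^∞` and `L¹`, as a map from `L^∞` to the dual of
`L¹`. -/
noncomputable def dualPairing (μ : Measure α) : Lp ℝ ⊤ μ →L[ℝ] StrongDual ℝ (Lp ℝ 1 μ) :=
  (ContinuousLinearMap.mul ℝ ℝ).lpPairing μ ⊤ 1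

variable {p : Lp ℝ ⊤ μ} {f : Lp ℝ 1 μ}

lemma dualPairing_apply (p : Lp ℝ ⊤ μ) (f : Lp ℝ 1 μ) :
    dualPairing μ p f = ∫ x, p x * f x ∂μ :=
  (ContinuousLinearMap.mul ℝ ℝ).lpPairing_eq_integral p f

lemma integrable_Lp_top_mul_Lp_one (p : Lp ℝ ⊤ μ) (f : Lp ℝ 1 μ) :
    Integrable (fun x ↦ p x * f x) μ :=
  memLp_one_iff_integrable.1 ((Lp.memLp f).mul (Lp.memLp p))

lemma dualPairing_nonneg (hp : 0 ≤ p) (hf : 0 ≤ f) : 0 ≤ dualPairing μ p f := by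
  rw [dualPairing_apply]
  refine integral_nonneg_of_ae ?_
  filter_upwards [(Lp.coeFn_nonneg p).2 hp, (Lp.coeFn_nonneg f).2 hf] with x hpx hfx
  exact mul_nonneg hpx hfx

lemma dualPairing_mono {q : Lp ℝ ⊤ μ} (hpq : p ≤ q) (hf : 0 ≤ f) :
    dualPairing μ p f ≤ dualPairing μ q f := by
  rw [← sub_nonneg, ← sub_apply, ← map_sub]
  exact dualPairing_nonneg (sub_nonneg.2 hpq) hf

lemma mul_ae_eq_zero_of_dualPairing_eq_zero (hp : 0 ≤ p) (hf : 0 ≤ f)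
    (h : dualPairing μ p f = 0) : ∀ᵐ x ∂μ, p x * f x = 0 := by
  rw [dualPairing_apply] at h
  refine (integral_eq_zero_iff_of_nonneg_ae ?_ (integrable_Lp_top_mul_Lp_one p f)).1 h
  filter_upwards [(Lp.coeFn_nonneg p).2 hp, (Lp.coeFn_nonneg f).2 hf] with x hpx hfx
  exact mul_nonneg hpx hfx

lemma dualPairing_pos_of_ae_pos_left (hp : ∀ᵐ x ∂μ, 0 < p x) (hf : 0 ≤ f) (hf0 : f ≠ 0) :
    0 < dualPairing μ p f := by
  have hp0 : 0 ≤ p := (Lp.coeFn_nonneg p).1 (hp.mono fun _ ↦ le_of_lt)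
  refine (dualPairing_nonneg hp0 hf).lt_of_ne' fun h ↦ hf0 (Lp.eq_zero_iff_ae_eq_zero.2 ?_)
  filter_upwards [mul_ae_eq_zero_of_dualPairing_eq_zero hp0 hf h, hp] with x hx hpx
  exact (mul_eq_zero.1 hx).resolve_left hpx.ne'

lemma dualPairing_pos_of_ae_pos_right (hp : 0 ≤ p) (hp0 : p ≠ 0) (hf : ∀ᵐ x ∂μ, 0 < f x) :
    0 < dualPairing μ p f := by
  have hf0 : 0 ≤ f := (Lp.coeFn_nonneg f).1 (hf.mono fun _ ↦ le_of_lt)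
  refine (dualPairing_nonneg hp hf0).lt_of_ne' fun h ↦ hp0 (Lp.eq_zero_iff_ae_eq_zero.2 ?_)
  filter_upwards [mul_ae_eq_zero_of_dualPairing_eq_zero hp hf0 h, hf] with x hx hfx
  exact (mul_eq_zero.1 hx).resolve_right hfx.ne'

lemma norm_dualPairing_le (p : Lp ℝ ⊤ μ) : ‖dualPairing μ p‖ ≤ ‖p‖ := by
  refine ContinuousLinearMap.opNorm_le_bound _ (norm_nonneg p) fun f ↦ ?_
  have h1 : ‖(L1.integralCLM : Lp ℝ 1 μ →L[ℝ] ℝ)‖ ≤ 1 := L1.norm_Integral_le_one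
  calc ‖dualPairing μ p f‖
      ≤ ‖(ContinuousLinearMap.mul ℝ ℝ).holder 1 p f‖ :=
        ContinuousLinearMap.le_of_opNorm_le _ h1 _ |>.trans_eq (one_mul _)
    _ ≤ ‖ContinuousLinearMap.mul ℝ ℝ‖ * ‖p‖ * ‖f‖ :=
        (ContinuousLinearMap.mul ℝ ℝ).norm_holder_apply_apply_le p f
    _ = ‖p‖ * ‖f‖ := by rw [ContinuousLinearMap.opNorm_mul, one_mul]

lemma indicatorConstLp_one_nonneg {q : ℝ≥0∞} {s : Set α} (hs : MeasurableSet s) (hμs : μ s ≠ ∞) :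
    0 ≤ indicatorConstLp q hs hμs (1 : ℝ) := by
  refine (Lp.coeFn_nonneg _).1 ?_
  filter_upwards [indicatorConstLp_coeFn (p := q) (hs := hs) (hμs := hμs) (c := (1 : ℝ))] with x hx
  rw [hx]
  exact Set.indicator_nonneg (fun _ _ ↦ zero_le_one) x

lemma dualPairing_indicatorConstLp_one (p : Lp ℝ ⊤ μ) {s : Set α} (hs : MeasurableSet s)
    (hμs : μ s ≠ ∞) : dualPairing μ p (indicatorConstLp 1 hs hμs 1) = ∫ x in s, p x ∂μ := by
  rw [dualPairing_apply, ← integral_indicator hs]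
  refine integral_congr_ae ?_
  filter_upwards [indicatorConstLp_coeFn (p := 1) (hs := hs) (hμs := hμs) (c := (1 : ℝ))] with x hx
  by_cases hxs : x ∈ s <;> simp [hx, hxs]

variable [SigmaFinite μ]

lemma ae_le_of_forall_setIntegral_le {g h : α → ℝ}
    (hg : ∀ s, MeasurableSet s → μ s < ∞ → IntegrableOn g s μ)
    (hh : ∀ s, MeasurableSet s → μ s < ∞ → IntegrableOn h s μ)
    (hgh : ∀ s, MeasurableSet s → μ s < ∞ → ∫ x in s, g x ∂μ ≤ ∫ x in s, h x ∂μ) :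
    g ≤ᵐ[μ] h := by
  have hsub : 0 ≤ᵐ[μ] fun x ↦ h x - g x := ae_nonneg_of_forall_setIntegral_nonneg_of_sigmaFinite
    (fun s hs hμs ↦ (hh s hs hμs).sub (hg s hs hμs)) fun s hs hμs ↦ by
      rw [integral_sub (hh s hs hμs) (hg s hs hμs)]
      exact sub_nonneg.2 (hgh s hs hμs)
  exact hsub.mono fun x ↦ sub_nonneg.1

lemma ae_le_of_dualPairing_le {c : ℝ} (h : ∀ f, 0 ≤ f → dualPairing μ p f ≤ c * ‖f‖) :
    ∀ᵐ x ∂μ, p x ≤ c := by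
  refine ae_le_of_forall_setIntegral_le
    (fun s _ hμs ↦ integrableOn_Lp_of_measure_ne_top p le_top hμs.ne)
    (fun s _ hμs ↦ integrableOn_const hμs.ne) fun s hs hμs ↦ ?_
  calc ∫ x in s, p x ∂μ
      = dualPairing μ p (indicatorConstLp 1 hs hμs.ne 1) :=
        (dualPairing_indicatorConstLp_one p hs hμs.ne).symm
    _ ≤ c * ‖indicatorConstLp 1 hs hμs.ne (1 : ℝ)‖ := h _ (indicatorConstLp_one_nonneg hs hμs.ne)
    _ = ∫ _ in s, c ∂μ := by
        simp [norm_indicatorConstLp one_ne_zero one_ne_top, mul_comm]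

lemma nonneg_of_dualPairing_nonneg (h : ∀ f, 0 ≤ f → 0 ≤ dualPairing μ p f) : 0 ≤ p := by
  have hneg : ∀ᵐ x ∂μ, (-p : Lp ℝ ⊤ μ) x ≤ 0 := ae_le_of_dualPairing_le fun f hf ↦ by
    rw [map_neg, neg_apply, zero_mul]
    exact neg_nonpos.2 (h f hf)
  refine (Lp.coeFn_nonneg p).1 ?_
  filter_upwards [hneg, Lp.coeFn_neg p] with x hx hpx
  rw [hpx] at hx
  exact neg_nonpos.1 hx

lemma norm_dualPairing (p : Lp ℝ ⊤ μ) : ‖dualPairing μ p‖ = ‖p‖ := by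
  refine (norm_dualPairing_le p).antisymm ?_
  have hp : ∀ᵐ x ∂μ, p x ≤ ‖dualPairing μ p‖ := ae_le_of_dualPairing_le fun f _ ↦
    (le_abs_self _).trans ((dualPairing μ p).le_opNorm f)
  have hn : ∀ᵐ x ∂μ, (-p : Lp ℝ ⊤ μ) x ≤ ‖dualPairing μ p‖ := ae_le_of_dualPairing_le fun f _ ↦ by
    rw [map_neg]
    exact (neg_le_abs _).trans ((dualPairing μ p).le_opNorm f)
  rw [Lp.norm_def, eLpNorm_exponent_top]
  refine toReal_le_of_le_ofReal (norm_nonneg _) (eLpNormEssSup_le_of_ae_bound ?_)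
  filter_upwards [hp, hn, Lp.coeFn_neg p] with x hx hnx hpx
  exact abs_le'.2 ⟨hx, by rwa [hpx] at hnx⟩

end DualPairing

section Representation

variable {α : Type*} [MeasurableSpace α] {μ : Measure α}

/-- Multiplication by `w ∈ L²`, as an operator from `L²` to `L¹`. -/
noncomputable def mulOperator (w : Lp ℝ 2 μ) : Lp ℝ 2 μ →L[ℝ] Lp ℝ 1 μ :=
  (ContinuousLinearMap.mul ℝ ℝ).holderL μ 2 2 1 w

lemma coeFn_mulOperator (w u : Lp ℝ 2 μ) : mulOperator w u =ᵐ[μ] fun x ↦ w x * u x :=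
  (ContinuousLinearMap.mul ℝ ℝ).coeFn_holder w u

lemma exists_Lp_two_ae_pos (μ : Measure α) [SigmaFinite μ] :
    ∃ w : Lp ℝ 2 μ, ∀ᵐ x ∂μ, 0 < w x := by
  obtain ⟨g, hgpos, hgm, hg⟩ := exists_pos_lintegral_lt_of_sigmaFinite μ one_ne_zero
  have hint : Integrable (fun x ↦ (g x : ℝ)) μ :=
    ⟨hgm.coe_nnreal_real.aestronglyMeasurable, by
      simpa [hasFiniteIntegral_iff_enorm] using hg.trans one_lt_top⟩
  have hmem : MemLp (fun x ↦ √(g x : ℝ)) 2 μ :=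
    (memLp_two_iff_integrable_sq hgm.coe_nnreal_real.sqrt.aestronglyMeasurable).2 <|
      hint.congr (.of_forall fun x ↦ (Real.sq_sqrt (g x).coe_nonneg).symm)
  refine ⟨hmem.toLp, ?_⟩
  filter_upwards [hmem.coeFn_toLp] with x hx
  rw [hx]
  exact Real.sqrt_pos.2 (hgpos x)

lemma tendsto_indicator_le_natCast_mul {β : Type*} {v f : β → ℝ} {x : β} (hv : 0 < v x) :
    Tendsto (fun n : ℕ ↦ {y | |f y| ≤ n * v y}.indicator f x) atTop (𝓝 (f x)) := by
  obtain ⟨N, hN⟩ := exists_nat_ge (|f x| / v x)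
  refine tendsto_const_nhds.congr' ((eventually_ge_atTop N).mono fun n hn ↦ ?_)
  have hx : x ∈ {y | |f y| ≤ n * v y} := (div_le_iff₀ hv).1 (hN.trans (Nat.cast_le.2 hn))
  exact (Set.indicator_of_mem hx f).symm

-- Where `|f| ≤ n w²`, the quotient `f / w` is dominated by `n w`.
lemma memLp_two_indicator_div {f w : α → ℝ} (hf : Measurable f) (hw : Measurable w)
    (hw2 : MemLp w 2 μ) (hwpos : ∀ᵐ x ∂μ, 0 < w x) (n : ℕ) :
    MemLp ({x | |f x| ≤ n * w x ^ 2}.indicator fun x ↦ f x / w x) 2 μ := by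
  refine hw2.of_le_mul (c := n) ((hf.div hw).indicator
    (measurableSet_le hf.abs ((hw.pow_const 2).const_mul _))).aestronglyMeasurable ?_
  filter_upwards [hwpos] with x hx
  by_cases hxs : x ∈ {x | |f x| ≤ n * w x ^ 2}
  · rw [Set.indicator_of_mem hxs, norm_div, Real.norm_of_nonneg hx.le, div_le_iff₀ hx, mul_assoc,
      ← sq]
    exact hxs
  · rw [Set.indicator_of_notMem hxs, norm_zero]
    positivity

lemma denseRange_mulOperator_of_ae_pos {w : Lp ℝ 2 μ} (hw : ∀ᵐ x ∂μ, 0 < w x) :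
    DenseRange (mulOperator w) := by
  intro f
  have hwm := (Lp.stronglyMeasurable w).measurable
  have hfm := (Lp.stronglyMeasurable f).measurable
  let s (n : ℕ) : Set α := {x | |f x| ≤ n * w x ^ 2}
  have hs (n : ℕ) : MeasurableSet (s n) := measurableSet_le hfm.abs ((hwm.pow_const 2).const_mul _)
  have hu (n : ℕ) : MemLp ((s n).indicator fun x ↦ f x / w x) 2 μ :=
    memLp_two_indicator_div hfm hwm (Lp.memLp w) hw n
  have hcut (n : ℕ) : mulOperator w (hu n).toLp
      =ᵐ[μ] (s n).indicator f := by
    filter_upwards [coeFn_mulOperator w (hu n).toLp,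
      (hu n).coeFn_toLp, hw] with x hx hux hwx
    rw [hx, hux]
    by_cases hxs : x ∈ s n <;> simp [hxs, mul_div_cancel₀ _ hwx.ne']
  refine mem_closure_of_tendsto (b := atTop) ?_
    (.of_forall fun n ↦ Set.mem_range_self (hu n).toLp)
  refine (Lp.tendsto_Lp_iff_tendsto_eLpNorm' _ f).2 ?_
  refine (tendsto_lintegral_norm_of_dominated_convergence
    (fun n ↦ (hfm.indicator (hs n)).aestronglyMeasurable) (L1.integrable_coeFn f).norm.2
    (fun n ↦ .of_forall fun x ↦ norm_indicator_le_norm_self f x)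
    (hw.mono fun x hx ↦ tendsto_indicator_le_natCast_mul (pow_pos hx 2))).congr fun n ↦ ?_
  rw [eLpNorm_one_eq_lintegral_enorm]
  refine lintegral_congr_ae ((hcut n).mono fun x hx ↦ ?_)
  exact (ofReal_norm _).trans (congr_arg (‖· - f x‖ₑ) hx.symm)

variable [SigmaFinite μ]

lemma ae_le_norm_mul_of_inner_eq {w h : Lp ℝ 2 μ} (hw : ∀ᵐ x ∂μ, 0 < w x)
    {ψ : StrongDual ℝ (Lp ℝ 1 μ)}
    (hψ : ∀ u, inner ℝ u h = ψ (mulOperator w u)) :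
    ∀ᵐ x ∂μ, h x ≤ ‖ψ‖ * w x := by
  have hint (g : Lp ℝ 2 μ) (s : Set α) (hμs : μ s < ∞) : IntegrableOn g s μ :=
    integrableOn_Lp_of_measure_ne_top g one_le_two hμs.ne
  refine ae_le_of_forall_setIntegral_le (fun s _ ↦ hint h s)
    (fun s _ hμs ↦ (hint w s hμs).const_mul _) fun s hs hμs ↦ ?_
  set u := indicatorConstLp 2 hs hμs.ne (1 : ℝ)
  calc ∫ x in s, h x ∂μ
      = ψ (mulOperator w u) := by
        rw [← hψ, L2.inner_indicatorConstLp_one]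
    _ ≤ ‖ψ‖ * ‖mulOperator w u‖ :=
        (le_abs_self _).trans (ψ.le_opNorm _)
    _ = ∫ x in s, ‖ψ‖ * w x ∂μ := by
        rw [integral_const_mul, L1.norm_eq_integral_norm, ← integral_indicator hs]
        congr 1
        refine integral_congr_ae ?_
        filter_upwards [coeFn_mulOperator w u,
          indicatorConstLp_coeFn (p := 2) (hs := hs) (hμs := hμs.ne) (c := (1 : ℝ)), hw]
          with x hx hux hwx
        rw [hx, hux]
        by_cases hxs : x ∈ s <;> simp [hxs, abs_of_pos hwx]

-- Riesz representation in `L²` applied to `u ↦ ψ (w u)`, where `w > 0` is square integrable,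
-- gives `h` with `|h| ≤ ‖ψ‖ w`; then `ψ` is represented by `h / w`.
lemma dualPairing_surjective : Function.Surjective (dualPairing μ) := by
  intro ψ
  obtain ⟨w, hw⟩ := exists_Lp_two_ae_pos μ
  obtain ⟨h, hh⟩ := (InnerProductSpace.toDual ℝ (Lp ℝ 2 μ)).surjective (ψ ∘L mulOperator w)
  have hψ (u : Lp ℝ 2 μ) : inner ℝ u h = ψ (mulOperator w u) := by
    rw [real_inner_comm]
    exact congr_arg (fun χ : StrongDual ℝ (Lp ℝ 2 μ) ↦ χ u) hh
  have hle := ae_le_norm_mul_of_inner_eq hw hψ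
  have hge := ae_le_norm_mul_of_inner_eq (h := -h) (ψ := -ψ) hw fun u ↦ by
    rw [inner_neg_right, hψ, neg_apply]
  have hbound : ∀ᵐ x ∂μ, ‖h x / w x‖ ≤ ‖ψ‖ := by
    filter_upwards [hw, hle, hge, Lp.coeFn_neg h] with x hwx hx hnx hnegx
    rw [norm_neg, hnegx] at hnx
    rw [norm_div, Real.norm_of_nonneg hwx.le, div_le_iff₀ hwx]
    exact abs_le'.2 ⟨hx, hnx⟩
  have hmem : MemLp (fun x ↦ h x / w x) ⊤ μ := memLp_top_of_bound
    ((Lp.aestronglyMeasurable h).div₀ (Lp.aestronglyMeasurable w)) _ hbound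
  refine ⟨hmem.toLp, DFunLike.coe_injective <|
    (denseRange_mulOperator_of_ae_pos hw).equalizer (ContinuousLinearMap.continuous _)
      ψ.continuous <| funext fun u ↦ ?_⟩
  calc dualPairing μ hmem.toLp (mulOperator w u)
      = ∫ x, h x * u x ∂μ := by
        rw [dualPairing_apply]
        refine integral_congr_ae ?_
        filter_upwards [hmem.coeFn_toLp, coeFn_mulOperator w u, hw] with x hx hJx hwx
        rw [hx, hJx, ← mul_assoc, div_mul_cancel₀ _ hwx.ne']
    _ = inner ℝ u h := rfl
    _ = ψ (mulOperator w u) := hψ u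

/-- The Riesz isometry `L^∞ ≃ (L¹)*`, `p ↦ ⟨p, ·⟩`, over a `σ`-finite measure. -/
noncomputable def dualEquiv (μ : Measure α) [SigmaFinite μ] :
    Lp ℝ ⊤ μ ≃ₗᵢ[ℝ] StrongDual ℝ (Lp ℝ 1 μ) :=
  LinearIsometryEquiv.ofSurjective ⟨(dualPairing μ).toLinearMap, norm_dualPairing⟩
    dualPairing_surjective

/-- The adjoint `T* : L^∞ → L^∞` of an operator on `L¹`, transported through `dualEquiv`. -/
noncomputable def dualOperator (T : Lp ℝ 1 μ →L[ℝ] Lp ℝ 1 μ) : Lp ℝ ⊤ μ →L[ℝ] Lp ℝ ⊤ μ :=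
  (dualEquiv μ).symm.toContinuousLinearEquiv.toContinuousLinearMap ∘L
    ContinuousLinearMap.precomp ℝ T ∘L dualPairing μ

lemma dualPairing_dualEquiv_symm (ψ : StrongDual ℝ (Lp ℝ 1 μ)) :
    dualPairing μ ((dualEquiv μ).symm ψ) = ψ :=
  (dualEquiv μ).apply_symm_apply ψ

lemma dualPairing_dualOperator (T : Lp ℝ 1 μ →L[ℝ] Lp ℝ 1 μ) (p : Lp ℝ ⊤ μ) :
    dualPairing μ (dualOperator T p) = dualPairing μ p ∘L T :=
  dualPairing_dualEquiv_symm _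

end Representation

section DominatedTails

variable {α : Type*} [MeasurableSpace α] {μ : Measure α}

lemma tendsto_iSup_add_of_tendsto_zero {a : ℕ → ℝ} (ha : ∀ i, 0 ≤ a i)
    (hlim : Tendsto a atTop (𝓝 0)) : Tendsto (fun n ↦ ⨆ i, a (n + i)) atTop (𝓝 0) := by
  refine Metric.tendsto_atTop.2 fun ε hε ↦ ?_
  obtain ⟨N, hN⟩ := eventually_atTop.1 (hlim.eventually (ge_mem_nhds (half_pos hε)))
  refine ⟨N, fun n hn ↦ ?_⟩
  rw [Real.dist_0_eq_abs, abs_of_nonneg (Real.iSup_nonneg fun i ↦ ha _)]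
  exact (ciSup_le fun i ↦ hN _ (hn.trans (Nat.le_add_right n i))).trans_lt (half_lt_self hε)

lemma exists_tail_majorant_tendsto_zero {p : ℕ → Lp ℝ ⊤ μ} (hp : ∀ i, 0 ≤ p i)
    (hp1 : ∀ i, ‖p i‖ ≤ 1) (hlim : ∀ᵐ x ∂μ, Tendsto (fun i ↦ p i x) atTop (𝓝 0)) :
    ∃ U : ℕ → Lp ℝ ⊤ μ, (∀ n i, n ≤ i → p i ≤ U n) ∧ (∀ n, ‖U n‖ ≤ 1) ∧
      ∀ f, Tendsto (fun n ↦ dualPairing μ (U n) f) atTop (𝓝 0) := by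
  have hpx : ∀ᵐ x ∂μ, ∀ i, 0 ≤ p i x ∧ p i x ≤ 1 := ae_all_iff.2 fun i ↦ by
    filter_upwards [(Lp.coeFn_nonneg (p i)).2 (hp i), ae_norm_le_norm_Lp_top (p i)] with x h0 h1
    exact ⟨h0, (le_abs_self _).trans (h1.trans (hp1 i))⟩
  have hu1 (n : ℕ) : ∀ᵐ x ∂μ, ‖⨆ i, p (n + i) x‖ ≤ 1 := hpx.mono fun x hx ↦ by
    rw [Real.norm_of_nonneg (Real.iSup_nonneg fun i ↦ (hx _).1)]
    exact ciSup_le fun i ↦ (hx _).2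
  have hu (n : ℕ) : MemLp (fun x ↦ ⨆ i, p (n + i) x) ⊤ μ := memLp_top_of_bound
    (Measurable.iSup fun i ↦ (Lp.stronglyMeasurable (p (n + i))).measurable).aestronglyMeasurable
    1 (hu1 n)
  refine ⟨fun n ↦ (hu n).toLp, fun n i hni ↦ ?_, fun n ↦ ?_, fun f ↦ ?_⟩
  · rw [← Lp.coeFn_le]
    filter_upwards [(hu n).coeFn_toLp, hpx] with x hx hpx
    obtain ⟨j, rfl⟩ := Nat.exists_eq_add_of_le hni
    rw [hx]
    exact le_ciSup (f := fun i ↦ p (n + i) x) ⟨1, Set.forall_mem_range.2 fun i ↦ (hpx _).2⟩ j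
  · rw [Lp.norm_toLp, eLpNorm_exponent_top]
    exact toReal_le_of_le_ofReal zero_le_one (eLpNormEssSup_le_of_ae_bound (hu1 n))
  · simp only [dualPairing_apply]
    rw [← integral_zero α ℝ (μ := μ)]
    refine tendsto_integral_of_dominated_convergence (fun x ↦ ‖f x‖)
      (fun n ↦ (integrable_Lp_top_mul_Lp_one _ f).aestronglyMeasurable)
      (L1.integrable_coeFn f).norm (fun n ↦ ?_) ?_
    · filter_upwards [(hu n).coeFn_toLp, hu1 n] with x hx hx1
      rw [hx, norm_mul]
      exact mul_le_of_le_one_left (norm_nonneg _) hx1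
    · filter_upwards [ae_all_iff.2 fun n ↦ (hu n).coeFn_toLp, hpx, hlim] with x hx hpx hlimx
      simp only [hx]
      rw [← zero_mul (f x)]
      exact (tendsto_iSup_add_of_tendsto_zero (fun i ↦ (hpx i).1) hlimx).mul_const _

lemma exists_subseq_tendsto_ae_of_dualPairing {p : ℕ → Lp ℝ ⊤ μ} (hp : ∀ i, 0 ≤ p i)
    {y : Lp ℝ 1 μ} (hy : ∀ᵐ x ∂μ, 0 < y x)
    (hlim : Tendsto (fun i ↦ dualPairing μ (p i) y) atTop (𝓝 0)) :
    ∃ s : ℕ → ℕ, StrictMono s ∧ ∀ᵐ x ∂μ, Tendsto (fun i ↦ p (s i) x) atTop (𝓝 0) := by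
  have hnorm (i : ℕ) : ENNReal.ofReal (dualPairing μ (p i) y) =
      eLpNorm ((fun x ↦ p i x * y x) - 0) 1 μ := by
    rw [sub_zero, eLpNorm_one_eq_lintegral_enorm, ← ofReal_integral_norm_eq_lintegral_enorm
      (integrable_Lp_top_mul_Lp_one (p i) y), dualPairing_apply]
    refine congr_arg _ (integral_congr_ae ?_)
    filter_upwards [(Lp.coeFn_nonneg (p i)).2 (hp i), hy] with x hpx hyx
    exact (Real.norm_of_nonneg (mul_nonneg hpx hyx.le)).symm
  have hmeas : TendstoInMeasure μ (fun i x ↦ p i x * y x) atTop 0 :=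
    tendstoInMeasure_of_tendsto_eLpNorm one_ne_zero
      (fun i ↦ (integrable_Lp_top_mul_Lp_one (p i) y).aestronglyMeasurable)
      aestronglyMeasurable_zero (ofReal_zero ▸ (ENNReal.tendsto_ofReal hlim).congr hnorm)
  obtain ⟨s, hs, hae⟩ := hmeas.exists_seq_tendsto_ae
  refine ⟨s, hs, ?_⟩
  filter_upwards [hae, hy] with x hx hyx
  simpa [hyx.ne'] using hx.mul_const (y x)⁻¹

end DominatedTails

section ExistenceOfEigenvectors

lemma exists_eigenvector_perronBound {X : Type*} [NormedAddCommGroup X] [Lattice X]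
    [NormedSpace ℝ X] [HasSolidNorm X] [IsOrderedAddMonoid X] [PosSMulMono ℝ X] [CompleteSpace X]
    {S W K : X →L[ℝ] X} (hS : Monotone S) (h0 : perronBound S ≠ 0) {I : StrongDual ℝ X}
    (hI : ∀ f, 0 ≤ f → I f = ‖f‖) {k : ℕ} (hWK : S ^ k = W + K) (hW : ‖W‖ < perronBound S ^ k)
    (hK : IsWeaklyCompactOperator K) :
    ∃ f : X, 0 ≤ f ∧ f ≠ 0 ∧ S f = perronBound S • f := by
  obtain ⟨f, hf, hf1, hlim⟩ := exists_approximate_eigenvectors hS h0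
  have hlim' : Tendsto (fun j ↦ (S - algebraMap ℝ (X →L[ℝ] X) (perronBound S)) (f j))
      (hyperfilter ℕ) (𝓝 0) := hlim.mono_left Nat.hyperfilter_le_atTop
  obtain ⟨y, hy⟩ := exists_weak_limit_of_approximate_eigenvectors hW hK (hyperfilter ℕ)
    (fun j ↦ (hf1 j).le) (hWK ▸ tendsto_pow_sub_algebraMap_apply hlim' k)
  have hIy : I y = 1 := tendsto_nhds_unique (hy I) <|
    tendsto_const_nhds.congr fun j ↦ by rw [hI _ (hf j), hf1]
  refine ⟨y, mem_of_weak_limit (convex_Ici 0) isClosed_Ici hf hy, ?_,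
    apply_eq_smul_of_weak_limit hlim' hy⟩
  rintro rfl
  exact zero_ne_one ((map_zero I).symm.trans hIy)

variable {α : Type*} [MeasurableSpace α] {μ : Measure α} {S T W K : Lp ℝ 1 μ →L[ℝ] Lp ℝ 1 μ}

-- Along a subsequence `p → 0` a.e., and the tails of `p` are dominated by functions `U n` tending
-- weak-* to `0`. Replacing `p` by `U n` decouples it from `g` and kills the weakly compact part.
lemma limit_dualPairing_apply_le_norm {c : ℝ} (hT : Monotone T) (hWK : T = W + K)
    (hK : IsWeaklyCompactOperator K) {p : ℕ → Lp ℝ ⊤ μ} (hp : ∀ i, 0 ≤ p i)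
    (hp1 : ∀ i, ‖p i‖ ≤ 1) {y : Lp ℝ 1 μ} (hy : ∀ᵐ x ∂μ, 0 < y x)
    (hpy : Tendsto (fun i ↦ dualPairing μ (p i) y) atTop (𝓝 0)) {g : ℕ → Lp ℝ 1 μ}
    (hg : ∀ i, 0 ≤ g i) (hg1 : ∀ i, ‖g i‖ ≤ 1)
    (hc : Tendsto (fun i ↦ dualPairing μ (p i) (T (g i))) atTop (𝓝 c)) : c ≤ ‖W‖ := by
  obtain ⟨s, hs, hae⟩ := exists_subseq_tendsto_ae_of_dualPairing hp hy hpy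
  obtain ⟨U, hpU, hU1, hU⟩ := exists_tail_majorant_tendsto_zero (fun i ↦ hp (s i))
    (fun i ↦ hp1 (s i)) hae
  obtain ⟨z, hz⟩ := exists_weak_limit_of_isWeaklyCompactOperator hK (hyperfilter ℕ)
    fun i ↦ hg1 (s i)
  have hWU (n i : ℕ) : dualPairing μ (U n) (W (g i)) ≤ ‖W‖ :=
    calc dualPairing μ (U n) (W (g i))
        ≤ ‖U n‖ * ‖W (g i)‖ :=
          (le_abs_self _).trans (ContinuousLinearMap.le_of_opNorm_le _ (norm_dualPairing_le _) _)
      _ ≤ ‖W (g i)‖ := mul_le_of_le_one_left (norm_nonneg _) (hU1 n)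
      _ ≤ ‖W‖ := W.unit_le_opNorm _ (hg1 i)
  have hTU (n i : ℕ) (hni : n ≤ i) : dualPairing μ (p (s i)) (T (g (s i))) ≤
      ‖W‖ + dualPairing μ (U n) (K (g (s i))) :=
    calc dualPairing μ (p (s i)) (T (g (s i)))
        ≤ dualPairing μ (U n) (T (g (s i))) :=
          dualPairing_mono (hpU n i hni) ((map_zero T).symm.trans_le (hT (hg (s i))))
      _ = dualPairing μ (U n) (W (g (s i))) + dualPairing μ (U n) (K (g (s i))) := by
          rw [hWK, add_apply, map_add]
      _ ≤ ‖W‖ + dualPairing μ (U n) (K (g (s i))) := add_le_add_left (hWU n _) _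
  have hn (n : ℕ) : c ≤ ‖W‖ + dualPairing μ (U n) z :=
    le_of_tendsto_of_tendsto
      ((hc.comp hs.tendsto_atTop).mono_left Nat.hyperfilter_le_atTop) ((hz _).const_add ‖W‖)
      (Nat.hyperfilter_le_atTop ((eventually_ge_atTop n).mono (hTU n)))
  simpa using ge_of_tendsto' ((hU z).const_add ‖W‖) hn

variable [SigmaFinite μ]

lemma nonneg_dualEquiv_symm {ψ : StrongDual ℝ (Lp ℝ 1 μ)} (hψ : Monotone ψ) :
    0 ≤ (dualEquiv μ).symm ψ :=
  nonneg_of_dualPairing_nonneg fun f hf ↦ by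
    rw [dualPairing_dualEquiv_symm]
    exact (map_zero ψ).symm.trans_le (hψ hf)

lemma exists_dual_eigenvector_perronBound (hS : Monotone S) (h0 : perronBound S ≠ 0)
    {k : ℕ} (hWK : S ^ k = W + K) (hW : ‖W‖ < perronBound S ^ k)
    (hK : IsWeaklyCompactOperator K) {y : Lp ℝ 1 μ} (hy : ∀ᵐ x ∂μ, 0 < y x) :
    ∃ φ : Lp ℝ ⊤ μ, 0 ≤ φ ∧ φ ≠ 0 ∧
      dualPairing μ φ ∘L S = perronBound S • dualPairing μ φ := by
  obtain ⟨q, g, hq, hq1, hqS, hg, hg1, hqg⟩ := exists_approximate_dual_eigenvectors hS h0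
    fun f ↦ integralCLM_eq_norm_of_nonneg
  have hqy : ¬ Tendsto (fun j ↦ q j y) atTop (𝓝 0) := fun hlim ↦ by
    have hqT : Tendsto (fun j ↦ q j ((S ^ k) (g j))) atTop (𝓝 (perronBound S ^ k)) :=
      mul_one (perronBound S ^ k) ▸
        tendsto_apply_pow_of_tendsto_comp_sub_algebraMap hqS hg1 hqg k
    refine hW.not_ge (limit_dualPairing_apply_le_norm (p := fun j ↦ (dualEquiv μ).symm (q j))
      (monotone_pow hS k) hWK hK (fun j ↦ nonneg_dualEquiv_symm (hq j))
      (fun j ↦ ((dualEquiv μ).symm.norm_map _).trans_le (hq1 j)) hy ?_ hg hg1 ?_)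
    · simpa only [dualPairing_dualEquiv_symm] using hlim
    · simpa only [dualPairing_dualEquiv_symm] using hqT
  obtain ⟨𝓤, h𝓤, hqy𝓤⟩ : ∃ 𝓤 : Ultrafilter ℕ, (𝓤 : Filter ℕ) ≤ atTop ∧
      ¬ Tendsto (fun j ↦ q j y) 𝓤 (𝓝 0) := by
    rw [tendsto_iff_ultrafilter] at hqy
    push Not at hqy
    exact hqy
  obtain ⟨q₀, hq₀⟩ := exists_weakStar_limit 𝓤 hq1
  refine ⟨(dualEquiv μ).symm q₀, nonneg_dualEquiv_symm fun f f' hff' ↦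
    le_of_tendsto_of_tendsto' (hq₀ f) (hq₀ f') fun j ↦ hq j hff', ?_, ?_⟩
  · refine (map_ne_zero_iff _ (dualEquiv μ).symm.injective).2 ?_
    rintro rfl
    exact hqy𝓤 (hq₀ y)
  · rw [dualPairing_dualEquiv_symm]
    exact comp_eq_smul_of_weakStar_limit (hqS.mono_left h𝓤) hq₀

end ExistenceOfEigenvectors

section PositivityImproving

variable {α : Type*} [MeasurableSpace α] {μ : Measure α}

/-- A map on an `Lp` space is positivity improving if it sends every nonzero nonnegative function
to a function that is positive almost everywhere. -/
def IsPositivityImproving {p : ℝ≥0∞} (T : Lp ℝ p μ → Lp ℝ p μ) : Prop :=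
  ∀ f, 0 ≤ f → f ≠ 0 → ∀ᵐ x ∂μ, 0 < T f x

section Lp

variable {p : ℝ≥0∞} [Fact (1 ≤ p)] {T : Lp ℝ p μ →L[ℝ] Lp ℝ p μ} {ℓ : StrongDual ℝ (Lp ℝ p μ)}
  {ρ : ℝ} {f g : Lp ℝ p μ}

lemma monotone_of_isPositivityImproving (hT : IsPositivityImproving T) : Monotone T := by
  refine (monotone_iff_map_nonneg T).2 fun f hf ↦ ?_
  rcases eq_or_ne f 0 with rfl | hf0
  · rw [map_zero]
  · exact (Lp.coeFn_nonneg _).1 ((hT f hf hf0).mono fun _ ↦ le_of_lt)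

lemma ae_pos_of_apply_eq_smul (hT : IsPositivityImproving T) (hρ : 0 < ρ) (hf : 0 ≤ f)
    (hf0 : f ≠ 0) (hTf : T f = ρ • f) : ∀ᵐ x ∂μ, 0 < f x := by
  filter_upwards [hTf ▸ hT f hf hf0, Lp.coeFn_smul ρ f] with x hx hρx
  rw [hρx, Pi.smul_apply, smul_eq_mul] at hx
  exact pos_of_mul_pos_right hx hρ.le

-- The positive part `g ⊔ 0` satisfies `ρ • (g ⊔ 0) ≤ T (g ⊔ 0)`, with equality by applying `ℓ`.
-- If it is nonzero then it is positive a.e., so that `0 < g` and `0 < ℓ g`.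
lemma nonpos_of_apply_eq_smul (hT : IsPositivityImproving T)
    (hℓ : ∀ f, 0 ≤ f → f ≠ 0 → 0 < ℓ f) (hρ : 0 < ρ) (hℓT : ℓ ∘L T = ρ • ℓ)
    (hg : T g = ρ • g) (hℓg : ℓ g = 0) : g ≤ 0 := by
  have hmono := monotone_of_isPositivityImproving hT
  have hle : ρ • (g ⊔ 0) ≤ T (g ⊔ 0) := by
    rw [← le_inv_smul_iff_of_pos hρ, sup_le_iff, le_inv_smul_iff_of_pos hρ,
      le_inv_smul_iff_of_pos hρ, smul_zero, ← hg]
    exact ⟨hmono le_sup_left, (map_zero T).symm.trans_le (hmono le_sup_right)⟩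
  have heq : T (g ⊔ 0) = ρ • (g ⊔ 0) := by
    by_contra hne
    refine (hℓ _ (sub_nonneg.2 hle) (sub_ne_zero.2 hne)).ne' ?_
    rw [map_sub, map_smul, sub_eq_zero]
    exact congr($hℓT (g ⊔ 0))
  by_contra hg0
  have hpos := ae_pos_of_apply_eq_smul hT hρ le_sup_right (mt sup_eq_right.1 hg0) heq
  have hgpos : ∀ᵐ x ∂μ, 0 < g x := by
    filter_upwards [hpos, Lp.coeFn_sup g 0, Lp.coeFn_zero ℝ p μ] with x hx hsup hzero
    rw [hsup, Pi.sup_apply, hzero, Pi.zero_apply, lt_sup_iff] at hx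
    exact hx.resolve_right (lt_irrefl 0)
  have hgnonneg : 0 ≤ g := (Lp.coeFn_nonneg g).1 (hgpos.mono fun _ ↦ le_of_lt)
  exact (hℓ g hgnonneg fun h ↦ hg0 h.le).ne' hℓg

lemma eq_zero_of_apply_eq_smul (hT : IsPositivityImproving T)
    (hℓ : ∀ f, 0 ≤ f → f ≠ 0 → 0 < ℓ f) (hρ : 0 < ρ) (hℓT : ℓ ∘L T = ρ • ℓ)
    (hg : T g = ρ • g) (hℓg : ℓ g = 0) : g = 0 :=
  le_antisymm (nonpos_of_apply_eq_smul hT hℓ hρ hℓT hg hℓg) <| neg_nonpos.1 <|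
    nonpos_of_apply_eq_smul hT hℓ hρ hℓT (by rw [map_neg, hg, smul_neg])
      (by rw [map_neg, hℓg, neg_zero])

lemma eq_of_apply_eq_smul (hT : IsPositivityImproving T)
    (hℓ : ∀ f, 0 ≤ f → f ≠ 0 → 0 < ℓ f) (hρ : 0 < ρ) (hℓT : ℓ ∘L T = ρ • ℓ)
    (hf : T f = ρ • f) (hg : T g = ρ • g) (hfg : ℓ f = ℓ g) : f = g :=
  sub_eq_zero.1 <| eq_zero_of_apply_eq_smul hT hℓ hρ hℓT (by rw [map_sub, hf, hg, smul_sub])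
    (by rw [map_sub, hfg, sub_self])

end Lp

variable [SigmaFinite μ] {T : Lp ℝ 1 μ →L[ℝ] Lp ℝ 1 μ}

lemma ae_pos_of_dualPairing_pos {p : Lp ℝ ⊤ μ}
    (hp : ∀ f, 0 ≤ f → f ≠ 0 → 0 < dualPairing μ p f) : ∀ᵐ x ∂μ, 0 < p x := by
  by_contra hnot
  have hmeas : MeasurableSet {x | ¬ 0 < p x} :=
    (measurableSet_lt measurable_const (Lp.stronglyMeasurable p).measurable).compl
  obtain ⟨s, hs, hsub, hs0, hsfin⟩ :=
    Measure.exists_subset_measure_lt_top hmeas (pos_iff_ne_zero.2 hnot)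
  have hind : indicatorConstLp 1 hs hsfin.ne (1 : ℝ) ≠ 0 := by
    rw [← norm_ne_zero_iff, norm_indicatorConstLp one_ne_zero one_ne_top]
    simpa [measureReal_def] using (toReal_pos hs0.ne' hsfin.ne).ne'
  have hpos := hp _ (indicatorConstLp_one_nonneg hs hsfin.ne) hind
  rw [dualPairing_indicatorConstLp_one] at hpos
  exact hpos.not_ge (setIntegral_nonpos hs fun x hx ↦ not_lt.1 (hsub hx))

lemma isPositivityImproving_dualOperator (hT : IsPositivityImproving T) :
    IsPositivityImproving (dualOperator T) := fun p hp hp0 ↦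
  ae_pos_of_dualPairing_pos fun f hf hf0 ↦ by
    rw [dualPairing_dualOperator]
    exact dualPairing_pos_of_ae_pos_right hp hp0 (hT f hf hf0)

end PositivityImproving

section Eigentriplet

variable {α : Type*} [MeasurableSpace α] {μ : Measure α} {S W K : Lp ℝ 1 μ →L[ℝ] Lp ℝ 1 μ}
  {Λ Λ' : ℝ} {f f' : Lp ℝ 1 μ} {φ φ' : Lp ℝ ⊤ μ} {k : ℕ}

/-- A normalised Perron eigentriplet of `S`: an eigenvalue with a nonnegative eigenvector of `S` and
a nonnegative eigenvector of the adjoint of `S`, the latter equation being tested against `L¹`. -/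
structure IsPerronTriplet (S : Lp ℝ 1 μ →L[ℝ] Lp ℝ 1 μ) (Λ : ℝ) (f : Lp ℝ 1 μ) (φ : Lp ℝ ⊤ μ) :
    Prop where
  nonneg_vector : 0 ≤ f
  nonneg_covector : 0 ≤ φ
  apply_eq : S f = Λ • f
  comp_eq : dualPairing μ φ ∘L S = Λ • dualPairing μ φ
  norm_covector : ‖φ‖ = 1
  dualPairing_eq_one : dualPairing μ φ f = 1

lemma isPerronTriplet_iff : IsPerronTriplet S Λ f φ ↔ 0 ≤ f ∧ 0 ≤ φ ∧ S f = Λ • f ∧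
    (∀ g : Lp ℝ 1 μ, ∫ x, φ x * (S g) x ∂μ = Λ * ∫ x, φ x * g x ∂μ) ∧ ‖φ‖ = 1 ∧
    (∫ x, φ x * f x ∂μ) = 1 := by
  simp only [← dualPairing_apply]
  exact ⟨fun ⟨h₁, h₂, h₃, h₄, h₅, h₆⟩ ↦ ⟨h₁, h₂, h₃, fun g ↦ congr($h₄ g), h₅, h₆⟩,
    fun ⟨h₁, h₂, h₃, h₄, h₅, h₆⟩ ↦ ⟨h₁, h₂, h₃, ContinuousLinearMap.ext h₄, h₅, h₆⟩⟩

lemma pow_apply_eq_smul {E : Type*} [NormedAddCommGroup E] [NormedSpace ℝ E] {A : E →L[ℝ] E}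
    {a : ℝ} {v : E} (h : A v = a • v) (n : ℕ) : (A ^ n) v = a ^ n • v := by
  induction n with
  | zero => simp only [pow_zero, one_apply_eq_self, one_smul]
  | succ n ih => rw [pow_succ, mul_apply_eq_comp, h, map_smul, ih, smul_smul, pow_succ']

lemma comp_pow_eq_smul {E : Type*} [NormedAddCommGroup E] [NormedSpace ℝ E] {A : E →L[ℝ] E}
    {a : ℝ} {ψ : StrongDual ℝ E} (h : ψ ∘L A = a • ψ) (n : ℕ) : ψ ∘L A ^ n = a ^ n • ψ := by
  induction n with
  | zero => simp only [pow_zero, one_smul]; rfl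
  | succ n ih =>
    calc ψ ∘L A ^ (n + 1) = (ψ ∘L A ^ n) ∘L A := by rw [pow_succ]; rfl
      _ = a ^ (n + 1) • ψ := by
        rw [ih, ContinuousLinearMap.smul_comp, h, smul_smul, pow_succ]

lemma eigenvalue_eq_of_isPerronTriplet (h : IsPerronTriplet S Λ f φ)
    (h' : IsPerronTriplet S Λ' f' φ') (hφ : ∀ᵐ x ∂μ, 0 < φ x) : Λ' = Λ := by
  have hf' : f' ≠ 0 := by
    rintro rfl
    exact zero_ne_one ((map_zero _).symm.trans h'.dualPairing_eq_one)
  have heq : Λ * dualPairing μ φ f' = Λ' * dualPairing μ φ f' := by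
    rw [← smul_eq_mul Λ', ← map_smul, ← h'.apply_eq]
    exact congr($h.comp_eq f').symm
  exact (mul_right_cancel₀ (dualPairing_pos_of_ae_pos_left hφ h'.nonneg_vector hf').ne' heq).symm

variable [SigmaFinite μ]

lemma dualOperator_eq_smul_iff {T : Lp ℝ 1 μ →L[ℝ] Lp ℝ 1 μ} :
    dualOperator T φ = Λ • φ ↔ dualPairing μ φ ∘L T = Λ • dualPairing μ φ := by
  rw [← dualPairing_dualOperator, ← map_smul]
  exact (dualEquiv μ).injective.eq_iff.symm

lemma eq_dualPairing_smul_of_isPerronTriplet (hS : IsPositivityImproving ⇑(S ^ k)) (hΛ : 0 < Λ)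
    (h : IsPerronTriplet S Λ f φ) (hf : ∀ᵐ x ∂μ, 0 < f x)
    (hφ'S : dualPairing μ φ' ∘L S = Λ • dualPairing μ φ') : φ' = dualPairing μ φ' f • φ := by
  have hflip : (dualPairing μ).flip f ∘L dualOperator (S ^ k) =
      Λ ^ k • (dualPairing μ).flip f := by
    ext p
    calc dualPairing μ (dualOperator (S ^ k) p) f = dualPairing μ p ((S ^ k) f) :=
          congr($(dualPairing_dualOperator (S ^ k) p) f)
      _ = Λ ^ k • dualPairing μ p f := by rw [pow_apply_eq_smul h.apply_eq, map_smul]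
  refine eq_of_apply_eq_smul (isPositivityImproving_dualOperator hS)
    (fun p hp hp0 ↦ dualPairing_pos_of_ae_pos_right hp hp0 hf) (pow_pos hΛ k) hflip
    (dualOperator_eq_smul_iff.2 (comp_pow_eq_smul hφ'S k)) ?_ ?_
  · rw [map_smul, dualOperator_eq_smul_iff.2 (comp_pow_eq_smul h.comp_eq k), smul_comm]
  · rw [map_smul, ContinuousLinearMap.flip_apply, ContinuousLinearMap.flip_apply,
      h.dualPairing_eq_one, smul_eq_mul, mul_one]

lemma isPerronTriplet_unique (hS : IsPositivityImproving ⇑(S ^ k)) (hΛ : 0 < Λ)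
    (h : IsPerronTriplet S Λ f φ) (hf : ∀ᵐ x ∂μ, 0 < f x) (hφ : ∀ᵐ x ∂μ, 0 < φ x)
    (h' : IsPerronTriplet S Λ' f' φ') : Λ' = Λ ∧ f' = f ∧ φ' = φ := by
  obtain rfl := eigenvalue_eq_of_isPerronTriplet h h' hφ
  have hsmul := eq_dualPairing_smul_of_isPerronTriplet hS hΛ h hf h'.comp_eq
  have hone : dualPairing μ φ' f = 1 :=
    calc dualPairing μ φ' f = ‖dualPairing μ φ' f‖ * ‖φ‖ := by
          rw [Real.norm_of_nonneg (dualPairing_nonneg h'.nonneg_covector h.nonneg_vector),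
            h.norm_covector, mul_one]
      _ = 1 := by rw [← norm_smul, ← hsmul, h'.norm_covector]
  have hφ' : φ' = φ := by rw [hsmul, hone, one_smul]
  refine ⟨rfl, eq_of_apply_eq_smul hS (fun g hg hg0 ↦ dualPairing_pos_of_ae_pos_left hφ hg hg0)
    (pow_pos hΛ k) (comp_pow_eq_smul h.comp_eq k) (pow_apply_eq_smul h'.apply_eq k)
    (pow_apply_eq_smul h.apply_eq k) ?_, hφ'⟩
  rw [h.dualPairing_eq_one, ← hφ', h'.dualPairing_eq_one]

lemma exists_isPerronTriplet_perronBound (hS : Monotone S) (h0 : 0 < perronBound S)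
    (hWK : S ^ k = W + K) (hW : ‖W‖ < perronBound S ^ k) (hK : IsWeaklyCompactOperator K)
    (hSk : IsPositivityImproving ⇑(S ^ k)) :
    ∃ f φ, IsPerronTriplet S (perronBound S) f φ ∧
      (∀ᵐ x ∂μ, 0 < f x) ∧ ∀ᵐ x ∂μ, 0 < φ x := by
  obtain ⟨y, hy, hy0, hSy⟩ := exists_eigenvector_perronBound hS h0.ne'
    (fun _ ↦ integralCLM_eq_norm_of_nonneg) hWK hW hK
  have hypos := ae_pos_of_apply_eq_smul hSk (pow_pos h0 k) hy hy0 (pow_apply_eq_smul hSy k)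
  obtain ⟨ψ, hψ, hψ0, hψS⟩ := exists_dual_eigenvector_perronBound hS h0.ne' hWK hW hK hypos
  obtain ⟨φ, hφ⟩ : ∃ φ, φ = ‖ψ‖⁻¹ • ψ := ⟨_, rfl⟩
  have hφ_nonneg : 0 ≤ φ := hφ ▸ smul_nonneg (inv_nonneg.2 (norm_nonneg ψ)) hψ
  have hφ1 : ‖φ‖ = 1 := hφ ▸ norm_smul_inv_norm hψ0
  have hφ0 : φ ≠ 0 := norm_ne_zero_iff.1 (hφ1 ▸ one_ne_zero)
  have hφS : dualPairing μ φ ∘L S = perronBound S • dualPairing μ φ := by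
    rw [hφ, map_smul, ContinuousLinearMap.smul_comp, hψS, smul_comm]
  have hφy : 0 < dualPairing μ φ y := dualPairing_pos_of_ae_pos_right hφ_nonneg hφ0 hypos
  have hf_nonneg : 0 ≤ (dualPairing μ φ y)⁻¹ • y := smul_nonneg (inv_nonneg.2 hφy.le) hy
  have hSf : S ((dualPairing μ φ y)⁻¹ • y) = perronBound S • (dualPairing μ φ y)⁻¹ • y := by
    rw [map_smul, hSy, smul_comm]
  refine ⟨_, φ, ⟨hf_nonneg, hφ_nonneg, hSf, hφS, hφ1, ?_⟩, ?_, ?_⟩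
  · rw [map_smul, smul_eq_mul, inv_mul_cancel₀ hφy.ne']
  · exact ae_pos_of_apply_eq_smul hSk (pow_pos h0 k) hf_nonneg
      (smul_ne_zero (inv_ne_zero hφy.ne') hy0) (pow_apply_eq_smul hSf k)
  · exact ae_pos_of_apply_eq_smul (isPositivityImproving_dualOperator hSk) (pow_pos h0 k)
      hφ_nonneg hφ0 (dualOperator_eq_smul_iff.2 (comp_pow_eq_smul hφS k))

end Eigentriplet

theorem perron_eigentriplet_of_L1_semigroup_generator_general
    {α : Type*} [MeasurableSpace α] {μ : Measure α} [SigmaFinite μ]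
    (S W K : Lp ℝ 1 μ →L[ℝ] Lp ℝ 1 μ)
    (hpos : ∀ f : Lp ℝ 1 μ, 0 ≤ f → 0 ≤ S f)
    (k : ℕ) (κ₀ : ℝ) (hκ₀ : 0 < κ₀)
    (hlow : (∃ g₀ : Lp ℝ 1 μ, 0 ≤ g₀ ∧ g₀ ≠ 0 ∧ κ₀ • g₀ ≤ S g₀) ∨
      (∃ ψ₀ : Lp ℝ ⊤ μ, 0 ≤ ψ₀ ∧ ψ₀ ≠ 0 ∧ ∀ f : Lp ℝ 1 μ,
        0 ≤ f → κ₀ * ∫ x, ψ₀ x * f x ∂μ ≤ ∫ x, ψ₀ x * (S f) x ∂μ))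
    (hWK : S ^ k = W + K)
    (hW : ‖W‖ < κ₀ ^ k)
    (hK : IsCompact (closure
      ((fun f => toWeakSpaceCLM ℝ _ (K f)) '' Metric.closedBall 0 1)))
    (hSk : ∀ f : Lp ℝ 1 μ, 0 ≤ f → f ≠ 0 → ∀ᵐ x ∂μ, 0 < ((S ^ k) f) x) :
    ∃ (Λ₀ : ℝ) (f₀ : Lp ℝ 1 μ) (φ₀ : Lp ℝ ⊤ μ),
      (0 ≤ f₀ ∧ 0 ≤ φ₀ ∧ S f₀ = Λ₀ • f₀ ∧
        (∀ f : Lp ℝ 1 μ, ∫ x, φ₀ x * (S f) x ∂μ = Λ₀ * ∫ x, φ₀ x * f x ∂μ) ∧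
        ‖φ₀‖ = 1 ∧ (∫ x, φ₀ x * f₀ x ∂μ) = 1) ∧
      (0 < Λ₀ ∧ (∀ᵐ x ∂μ, 0 < f₀ x) ∧ (∀ᵐ x ∂μ, 0 < φ₀ x)) ∧
      (∀ (Λ' : ℝ) (f' : Lp ℝ 1 μ) (φ' : Lp ℝ ⊤ μ),
        0 ≤ f' → 0 ≤ φ' → S f' = Λ' • f' →
        (∀ f : Lp ℝ 1 μ, ∫ x, φ' x * (S f) x ∂μ = Λ' * ∫ x, φ' x * f x ∂μ) →
        ‖φ'‖ = 1 → (∫ x, φ' x * f' x ∂μ) = 1 →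
        Λ' = Λ₀ ∧ f' = f₀ ∧ φ' = φ₀) := by
  have hS : Monotone S := (monotone_iff_map_nonneg S).2 hpos
  have hκ : κ₀ ≤ perronBound S := by
    rcases hlow with ⟨g₀, hg, hg0, hκg⟩ | ⟨ψ₀, hψ, hψ0, hκψ⟩
    · exact le_perronBound_of_smul_le_apply hS hg hg0 hκg
    · refine le_perronBound_of_mul_le_comp hS (ψ := dualPairing μ ψ₀)
        ((monotone_iff_map_nonneg _).2 fun f ↦ dualPairing_nonneg hψ)
        ((map_ne_zero_iff _ (dualEquiv μ).injective).2 hψ0) ?_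
      simpa only [dualPairing_apply] using hκψ
  have hΛ : 0 < perronBound S := hκ₀.trans_le hκ
  obtain ⟨f, φ, h, hf, hφ⟩ := exists_isPerronTriplet_perronBound hS hΛ hWK
    (hW.trans_le (pow_le_pow_left₀ hκ₀.le hκ k))
    ((isWeaklyCompactOperator_iff_isCompact_closure_image_closedBall K).2 hK) hSk
  exact ⟨_, f, φ, isPerronTriplet_iff.1 h, ⟨hΛ, hf, hφ⟩,
    fun Λ' f' φ' hf' hφ' hS' hφS' hn hp ↦ isPerronTriplet_unique hSk hΛ h hf hφ
      (isPerronTriplet_iff.2 ⟨hf', hφ', hS', hφS', hn, hp⟩)⟩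

/-- **Corollary 2.5 (existence/uniqueness part).** Let `S` be a positive bounded operator on
`L¹(ℝ^d)` such that, for some `k ∈ ℕ` and `κ₀ > 0`: (1) there exists `g₀ ∈ L¹₊ \ {0}` with
`S g₀ ≥ κ₀ g₀`, or there exists `ψ₀ ∈ L^∞₊ \ {0}` with `S* ψ₀ ≥ κ₀ ψ₀`; (2) `S^k = W + K`
with `‖W‖ < κ₀^k` and `K` weakly compact in `L¹`; (3) `S^k f > 0` a.e. for every
`f ∈ L¹₊ \ {0}`.  Then there is a unique triplet `(Λ₀, f₀, φ₀)` with `S f₀ = Λ₀ f₀`,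
`S* φ₀ = Λ₀ φ₀`, `‖φ₀‖_∞ = 1` and `⟨φ₀, f₀⟩ = 1`; moreover `Λ₀ > 0` and `f₀, φ₀ > 0` a.e. -/
theorem perron_eigentriplet_of_L1_semigroup_generator
    {d : ℕ}
    (S W K : Lp ℝ 1 (volume : Measure (EuclideanSpace ℝ (Fin d))) →L[ℝ]
      Lp ℝ 1 (volume : Measure (EuclideanSpace ℝ (Fin d))))
    (hSpos : ∀ f : Lp ℝ 1 (volume : Measure (EuclideanSpace ℝ (Fin d))), 0 ≤ f → 0 ≤ S f)
    (k : ℕ) (κ₀ : ℝ) (hκ₀ : 0 < κ₀)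
    (h1 : (∃ g₀ : Lp ℝ 1 (volume : Measure (EuclideanSpace ℝ (Fin d))),
        0 ≤ g₀ ∧ g₀ ≠ 0 ∧ κ₀ • g₀ ≤ S g₀) ∨
      (∃ ψ₀ : Lp ℝ ⊤ (volume : Measure (EuclideanSpace ℝ (Fin d))),
        0 ≤ ψ₀ ∧ ψ₀ ≠ 0 ∧ ∀ f : Lp ℝ 1 (volume : Measure (EuclideanSpace ℝ (Fin d))),
          0 ≤ f → κ₀ * ∫ x, ψ₀ x * f x ≤ ∫ x, ψ₀ x * (S f) x))
    (h2 : S ^ k = W + K)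
    (hWnorm : ‖W‖ < κ₀ ^ k)
    (hKweak : IsCompact (closure
      ((fun f => toWeakSpaceCLM ℝ _ (K f)) '' Metric.closedBall 0 1)))
    (h3 : ∀ f : Lp ℝ 1 (volume : Measure (EuclideanSpace ℝ (Fin d))),
      0 ≤ f → f ≠ 0 → ∀ᵐ x, 0 < ((S ^ k) f) x) :
    ∃ (Λ₀ : ℝ) (f₀ : Lp ℝ 1 (volume : Measure (EuclideanSpace ℝ (Fin d))))
      (φ₀ : Lp ℝ ⊤ (volume : Measure (EuclideanSpace ℝ (Fin d)))),
      (0 ≤ f₀ ∧ 0 ≤ φ₀ ∧ S f₀ = Λ₀ • f₀ ∧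
        (∀ f : Lp ℝ 1 (volume : Measure (EuclideanSpace ℝ (Fin d))),
          ∫ x, φ₀ x * (S f) x = Λ₀ * ∫ x, φ₀ x * f x) ∧
        ‖φ₀‖ = 1 ∧ (∫ x, φ₀ x * f₀ x) = 1) ∧
      (0 < Λ₀ ∧ (∀ᵐ x, 0 < f₀ x) ∧ (∀ᵐ x, 0 < φ₀ x)) ∧
      (∀ (Λ' : ℝ) (f' : Lp ℝ 1 (volume : Measure (EuclideanSpace ℝ (Fin d))))
        (φ' : Lp ℝ ⊤ (volume : Measure (EuclideanSpace ℝ (Fin d)))),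
        0 ≤ f' → 0 ≤ φ' → S f' = Λ' • f' →
        (∀ f : Lp ℝ 1 (volume : Measure (EuclideanSpace ℝ (Fin d))),
          ∫ x, φ' x * (S f) x = Λ' * ∫ x, φ' x * f x) →
        ‖φ'‖ = 1 → (∫ x, φ' x * f' x) = 1 →
        Λ' = Λ₀ ∧ f' = f₀ ∧ φ' = φ₀) :=
  perron_eigentriplet_of_L1_semigroup_generator_general S W K hSpos k κ₀ hκ₀ h1 h2 hWnorm hKweak h3
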